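/- Let r ≥ 1 and let m_1, …, m_r and d_1, …, d_r be integers forming monic data, and let G be the group with presentation ⟨x, t | w⟩ where w = ∏_{i=1}^{r} t^{-d_i} x^{m_i} t^{d_i} in the free group on x, t. If every complex root of the polynomial A(X) = Σ_{i=1}^{r} m_i X^{d_i − e} ∈ ℤ[X], where e = min_{1≤i≤r} d_i, is a positive real number, then G is bi-orderable. -/

import Mathlib

/-!
Put `k = max d - e` and `x_j = t ^ (-(e + j)) * x * t ^ (e + j)`. As the data is monic, the relator
is equivalent to an equation `x_k = r(x_0, …, x_{k-1})`, so `G` is an ascending HNN extension of a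
free group of rank `k`, and each of its elements is `t ^ a * h * t ^ (-b)` with
`h ∈ ⟨x_0, …, x_{k-1}⟩`.

Let `M` be a lower triangular matrix with cyclic vector `v`, characteristic polynomial `A`, and the
positive roots of `A` on its diagonal. In the style of Magnus, represent `x_j`, for `j < k`, by
`1 + stripSum (M ^ j v)` on the finitely supported functions on words in `k` letters, where
`stripSum` deletes the first letter of a word with a weight depending on that letter. Since
`A(M) v = 0`, the operator `r(x_0, …, x_{k-1})` agrees with `1 + stripSum (M ^ k v)` up to operators
deleting at least two letters. Letters weigh between `k` and `2 * k - 1`, so this error is of lower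
order than every letter and can be absorbed into a triangular operator representing `t`. That
operator is scaled by `2`, which lets the vector of the empty word detect the exponent of `t`; the
representation is therefore faithful. Its image lies in the group of triangular operators with
positive diagonal, which is bi-ordered by comparing leading coefficients.
-/

/-- A group is bi-orderable if it admits a strict total order invariant under
left and right multiplication. -/
def IsBiOrderable (G : Type*) [Group G] : Prop :=
  ∃ lt : G → G → Prop, IsStrictTotalOrder G lt ∧
    ∀ a b c : G, lt a b → lt (c * a) (c * b) ∧ lt (a * c) (b * c)

theorem map_eq_smul_of_mem_supported_Iic {K ι M : Type*} [Semiring K] [LinearOrder ι]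
    [AddCommMonoid M] [Module K M] {f : (ι →₀ K) →ₗ[K] M} {i : ι}
    (hf : ∀ j < i, f (Finsupp.single j 1) = 0) {m : ι →₀ K}
    (hm : m ∈ Finsupp.supported K K (Set.Iic i)) :
    f m = m i • f (Finsupp.single i 1) := by
  have hsum : f m = m.sum fun j a => a • f (Finsupp.single j 1) := by
    conv_lhs => rw [← m.sum_single, map_finsuppSum]
    exact Finsupp.sum_congr fun j _ => by rw [← map_smul, Finsupp.smul_single_one]
  rw [hsum]
  exact Finset.sum_eq_single i
    (fun j hj hji => by simp only [hf j (lt_of_le_of_ne (hm hj) hji), smul_zero])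
    fun hi => by simp only [Finsupp.notMem_support_iff.1 hi, zero_smul]

section Triangular

variable {K ι κ : Type*} [CommRing K] [LinearOrder κ]

/-- An endomorphism of `ι →₀ K` is triangular for the weight `wt` with diagonal `c` if it sends
each basis vector `single i 1` to `single i (c i)` plus terms of smaller weight. This is phrased
through coordinates of vectors of weight at most `wt i`. -/
def IsTriangular (wt : ι → κ) (c : ι → K) (g : Module.End K (ι →₀ K)) : Prop :=
  ∀ i, ∀ m ∈ Finsupp.supported K K {j | wt j ≤ wt i}, g m i = c i * m i

namespace IsTriangular

variable {wt : ι → κ} {c c' : ι → K} {g g' : Module.End K (ι →₀ K)}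

theorem one : IsTriangular wt 1 (1 : Module.End K (ι →₀ K)) := fun i m _ => by simp

theorem smul (h : IsTriangular wt c g) (a : K) : IsTriangular wt (a • c) (a • g) :=
  fun i m hm => by simp [h i m hm, mul_assoc]

theorem map_supported (h : IsTriangular wt c g) {i : ι} {m : ι →₀ K}
    (hm : m ∈ Finsupp.supported K K {j | wt j ≤ wt i}) :
    g m ∈ Finsupp.supported K K {j | wt j ≤ wt i} := by
  rw [Finsupp.mem_supported'] at hm ⊢
  intro j hj
  rw [h j m ((Finsupp.mem_supported' K m).2 fun l hl =>
    hm l fun hli => hl (hli.trans (not_le.1 hj).le)), hm j hj, mul_zero]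

theorem mul (h : IsTriangular wt c g) (h' : IsTriangular wt c' g') :
    IsTriangular wt (c * c') (g * g') := fun i m hm => by
  rw [Module.End.mul_apply, h i _ (h'.map_supported hm), h' i m hm, Pi.mul_apply, mul_assoc]

theorem exists_maximal_apply (h : IsTriangular wt c g) {m : ι →₀ K} (hm : m ≠ 0) :
    ∃ j, m j ≠ 0 ∧ (∀ l, m l ≠ 0 → wt l ≤ wt j) ∧ g m j = c j * m j := by
  obtain ⟨j, hj, hmax⟩ := m.support.exists_max_image wt (Finsupp.support_nonempty_iff.2 hm)
  simp only [Finsupp.mem_support_iff] at hj hmax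
  exact ⟨j, hj, hmax, h j m fun l hl => hmax l (Finsupp.mem_support_iff.1 hl)⟩

theorem of_monotone {κ' : Type*} [LinearOrder κ'] {f : κ → κ'} (hf : Monotone f)
    (h : IsTriangular (f ∘ wt) c g) : IsTriangular wt c g :=
  fun i m hm => h i m fun _ hj => hf (hm hj)

theorem apply_single_of_le (h : IsTriangular wt c g) {i : ι} (hi : ∀ j, wt i ≤ wt j) :
    g (Finsupp.single i 1) = Finsupp.single i (c i) := by
  ext j
  rw [h j _ (Finsupp.single_mem_supported K 1 (hi j))]
  rcases eq_or_ne i j with rfl | hij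
  · simp
  · simp [hij]

variable [NoZeroDivisors K]

theorem mem_supported_of_apply (h : IsTriangular wt c g) (hc : ∀ i, c i ≠ 0) {i : ι}
    {m : ι →₀ K} (hm : g m ∈ Finsupp.supported K K {j | wt j ≤ wt i}) :
    m ∈ Finsupp.supported K K {j | wt j ≤ wt i} := by
  rcases eq_or_ne m 0 with rfl | hne
  · exact zero_mem _
  obtain ⟨j, hj, hmax, hgj⟩ := h.exists_maximal_apply hne
  have hji : wt j ≤ wt i := hm <| Finsupp.mem_support_iff.2 <| hgj ▸ mul_ne_zero (hc j) hj
  exact fun l hl => (hmax l (Finsupp.mem_support_iff.1 hl)).trans hji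

theorem injective (h : IsTriangular wt c g) (hc : ∀ i, c i ≠ 0) : Function.Injective g := by
  refine (injective_iff_map_eq_zero g).2 fun m hm => by_contra fun hne => ?_
  obtain ⟨j, hj, -, hgj⟩ := h.exists_maximal_apply hne
  exact mul_ne_zero (hc j) hj (by rw [← hgj, hm, Finsupp.zero_apply])

end IsTriangular

end Triangular

section TriangularGroup

variable {K ι κ : Type*} [Field K] [LinearOrder κ] {wt : ι → κ} {c : ι → K}

theorem IsTriangular.surjective [WellFoundedLT κ] {g : Module.End K (ι →₀ K)}
    (h : IsTriangular wt c g) (hc : ∀ i, c i ≠ 0) : Function.Surjective g := by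
  have hsingle : ∀ i, Finsupp.single i 1 ∈ LinearMap.range g := by
    intro i
    induction hn : wt i using WellFoundedLT.induction generalizing i with
    | ind n ih =>
      subst hn
      have hlower : g (Finsupp.single i 1) - c i • Finsupp.single i 1 ∈ LinearMap.range g := by
        suffices g (Finsupp.single i 1) - c i • Finsupp.single i 1 ∈
            Finsupp.supported K K {j | wt j < wt i} from
          (Finsupp.supported_eq_span_single K _ ▸ Submodule.span_le.2
            (Set.image_subset_iff.2 fun j hj => ih _ hj j rfl) :
              Finsupp.supported K K {j | wt j < wt i} ≤ LinearMap.range g) this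
        refine (Finsupp.mem_supported' K _).2 fun j hj => ?_
        have hj : wt i ≤ wt j := not_lt.1 hj
        rw [Finsupp.sub_apply, h j _ (Finsupp.single_mem_supported K 1 hj)]
        rcases eq_or_ne i j with rfl | hij
        · simp
        · simp [hij]
      have := sub_mem (LinearMap.mem_range_self g (Finsupp.single i 1)) hlower
      rw [sub_sub_cancel] at this
      exact (Submodule.smul_mem_iff _ (hc i)).1 this
  refine LinearMap.range_eq_top.1 (top_le_iff.1 fun m _ => ?_)
  rw [← m.sum_single]
  refine Submodule.sum_mem _ fun i _ => ?_
  rw [← mul_one (m i), ← smul_eq_mul, ← Finsupp.smul_single]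
  exact Submodule.smul_mem _ _ (hsingle i)

theorem IsTriangular.isUnit [WellFoundedLT κ] {g : Module.End K (ι →₀ K)}
    (h : IsTriangular wt c g) (hc : ∀ i, c i ≠ 0) : IsUnit g :=
  (Module.End.isUnit_iff g).2 ⟨h.injective hc, h.surjective hc⟩

variable [LinearOrder K] [IsStrictOrderedRing K]

variable (K) in
/-- The group of invertible triangular endomorphisms of `ι →₀ K` with positive diagonal. -/
def triangularGroup (wt : ι → κ) : Subgroup (Module.End K (ι →₀ K))ˣ where
  carrier := {u | ∃ c : ι → K, (∀ i, 0 < c i) ∧ IsTriangular wt c u}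
  one_mem' := ⟨1, fun _ => one_pos, .one⟩
  mul_mem' := fun ⟨c, hc, h⟩ ⟨c', hc', h'⟩ => ⟨c * c', fun i => mul_pos (hc i) (hc' i), h.mul h'⟩
  inv_mem' := by
    rintro u ⟨c, hc, h⟩
    refine ⟨c⁻¹, fun i => inv_pos.2 (hc i), fun i m hm => ?_⟩
    have hu : (u : Module.End K (ι →₀ K)) (u⁻¹ • m) = m := smul_inv_smul u m
    have hdiag := h i _ (h.mem_supported_of_apply (fun i => (hc i).ne') (hu.symm ▸ hm))
    rw [hu] at hdiag
    rw [hdiag, Pi.inv_apply, inv_mul_cancel_left₀ (hc i).ne']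
    rfl

end TriangularGroup

section BiOrder

variable {K ι : Type*} [CommRing K] [LinearOrder K] [IsStrictOrderedRing K]

theorem exists_linearOrder_refining {κ : Type*} [LinearOrder κ] [WellFoundedLT κ] (wt : ι → κ) :
    ∃ (_ : LinearOrder ι) (_ : WellFoundedLT ι), Monotone wt := by
  obtain ⟨_, hι⟩ := exists_wellFoundedLT ι
  let f : ι → κ ×ₗ ι := fun i => toLex (wt i, i)
  have hf : Function.Injective f := fun i j h => congrArg (fun p => (ofLex p).2) h
  refine ⟨LinearOrder.lift' f hf, ⟨InvImage.wf f (wellFounded_lt (α := κ ×ₗ ι))⟩, fun i j h => ?_⟩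
  rcases (Prod.Lex.le_iff (x := f i) (y := f j)).1 h with h | h
  exacts [h.le, h.1.le]

theorem IsTriangular.strictMono_colex [LinearOrder ι] {c : ι → K} (hc : ∀ i, 0 < c i)
    {g : Module.End K (ι →₀ K)} (h : IsTriangular id c g) :
    StrictMono fun m : Colex (ι →₀ K) => toColex (g (ofColex m)) := by
  intro m m' hlt
  obtain ⟨i, heq, hi⟩ := Finsupp.Colex.lt_iff.1 hlt
  have hcoord : ∀ j, i ≤ j → g (ofColex m' - ofColex m) j = c j * (ofColex m' - ofColex m) j :=
    fun j hij => h j _ ((Finsupp.mem_supported' K _).2 fun l hl => by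
      simp [heq l (hij.trans_lt (not_le.1 hl))])
  simp only [map_sub, Finsupp.sub_apply] at hcoord
  refine Finsupp.Colex.lt_iff.2 ⟨i, fun j hij => ?_, ?_⟩
  · have := hcoord j hij.le
    rw [heq j hij, sub_self, mul_zero] at this
    exact (sub_eq_zero.1 this).symm
  · exact sub_pos.1 (hcoord i le_rfl ▸ mul_pos (hc i) (sub_pos.2 hi))

theorem isBiOrderable_of_isTriangular_id [LinearOrder ι] [WellFoundedLT ι] {G : Type*} [Group G]
    {ρ : G →* Module.End K (ι →₀ K)} (hρ : Function.Injective ρ)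
    (htri : ∀ g, ∃ c : ι → K, (∀ i, 0 < c i) ∧ IsTriangular id c (ρ g)) : IsBiOrderable G := by
  -- Compare `ρ a` and `ρ b` at the first basis vector on which they differ, by the sign of the
  -- top coordinate of the difference there.
  let columns (g : G) : Lex (ι → Colex (ι →₀ K)) :=
    toLex fun i => toColex (ρ g (Finsupp.single i 1))
  have hcolumns : Function.Injective columns := fun a b hab =>
    hρ <| Finsupp.lhom_ext' fun i => LinearMap.ext_ring (congrFun hab i)
  refine ⟨fun a b => columns a < columns b,
    (⟨⟨columns, hcolumns⟩, Iff.rfl⟩ : RelEmbedding (fun a b => columns a < columns b)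
      (· < ·)).isStrictTotalOrder, ?_⟩
  rintro a b g ⟨i, heq, hlt⟩
  obtain ⟨c, hc, hg⟩ := htri g
  have heq : ∀ j < i, ρ a (Finsupp.single j 1) = ρ b (Finsupp.single j 1) := heq
  have hlt : toColex (ρ a (Finsupp.single i 1)) < toColex (ρ b (Finsupp.single i 1)) := hlt
  have hright : ∀ j ≤ i, ρ (b * g) (Finsupp.single j 1) - ρ (a * g) (Finsupp.single j 1) =
      c j • (ρ b (Finsupp.single j 1) - ρ a (Finsupp.single j 1)) := fun j hj => by
    have hmem : Finsupp.single j 1 ∈ Finsupp.supported K K {l | l ≤ j} :=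
      Finsupp.single_mem_supported K 1 le_rfl
    simpa [hg j _ hmem] using map_eq_smul_of_mem_supported_Iic (f := ρ b - ρ a)
      (fun l hl => by simp [heq l (hl.trans_le hj)]) (hg.map_supported hmem)
  refine ⟨⟨i, fun j hj => ?_, ?_⟩, ⟨i, fun j hj => ?_, ?_⟩⟩
  · simp only [columns, map_mul, Module.End.mul_apply, Pi.toLex_apply, heq j hj]
  · simp only [columns, map_mul, Module.End.mul_apply, Pi.toLex_apply]
    exact hg.strictMono_colex hc hlt
  · have := hright j hj.le
    rw [heq j hj, sub_self, smul_zero, sub_eq_zero] at this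
    exact congrArg toColex this.symm
  · have hscale : 0 < toColex
        (c i • (ρ b (Finsupp.single i 1) - ρ a (Finsupp.single i 1))) := by
      simpa using (IsTriangular.one.smul (c i)).strictMono_colex
        (fun _ => by simpa using hc i) (sub_pos.2 hlt)
    rw [← hright i le_rfl, toColex_sub] at hscale
    exact sub_pos.1 hscale

theorem isBiOrderable_of_injective_triangularGroup {κ : Type*} [LinearOrder κ] [WellFoundedLT κ]
    {K : Type*} [Field K] [LinearOrder K] [IsStrictOrderedRing K] {wt : ι → κ} {G : Type*} [Group G]
    {ρ : G →* (Module.End K (ι →₀ K))ˣ}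
    (hρ : Function.Injective ρ) (htri : ∀ g, ρ g ∈ triangularGroup K wt) : IsBiOrderable G := by
  obtain ⟨_, _, hwt⟩ := exists_linearOrder_refining wt
  exact isBiOrderable_of_isTriangular_id (ρ := (Units.coeHom _).comp ρ)
    (Units.val_injective.comp hρ) fun g =>
      let ⟨c, hc, h⟩ := htri g
      ⟨c, hc, IsTriangular.of_monotone hwt h⟩

end BiOrder

section Lowering

variable {K ι : Type*} [CommRing K] {wt : ι → ℕ} {a b : ℕ} {D D' : Module.End K (ι →₀ K)}

variable (K) in
/-- The endomorphisms of `ι →₀ K` that lower the weight `wt` of every vector by at least `n`. As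
weights are natural numbers, vectors of weight less than `n` are killed. -/
noncomputable def lowering (wt : ι → ℕ) (n : ℕ) : Submodule K (Module.End K (ι →₀ K)) :=
  ⨅ b, Submodule.compatibleMaps (Finsupp.supported K K {i | wt i < b + n})
    (Finsupp.supported K K {i | wt i < b})

theorem mem_lowering {n : ℕ} : D ∈ lowering K wt n ↔
    ∀ b, ∀ m ∈ Finsupp.supported K K {i | wt i < b + n},
      D m ∈ Finsupp.supported K K {i | wt i < b} := by
  simp only [lowering, Submodule.mem_iInf, Submodule.compatibleMaps, Submodule.mem_mk]
  rfl

theorem lowering_anti (h : a ≤ b) : lowering K wt b ≤ lowering K wt a := fun D hD =>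
  mem_lowering.2 fun c m hm => mem_lowering.1 hD c m <|
    Finsupp.supported_mono (fun i (hi : wt i < c + a) => (by lia : wt i < c + b)) hm

theorem mul_mem_lowering (h : D ∈ lowering K wt a) (h' : D' ∈ lowering K wt b) :
    D * D' ∈ lowering K wt (a + b) :=
  mem_lowering.2 fun c m hm => mem_lowering.1 h c _ <| mem_lowering.1 h' (c + a) m <| by
    rwa [add_assoc]

theorem mul_mem_lowering_right (h : D ∈ lowering K wt a) (h' : D' ∈ lowering K wt 0) :
    D * D' ∈ lowering K wt a := add_zero a ▸ mul_mem_lowering h h'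

theorem list_prod_mem_lowering {l : List (Module.End K (ι →₀ K))}
    (h : ∀ D ∈ l, D ∈ lowering K wt 1) : l.prod ∈ lowering K wt l.length := by
  induction l with
  | nil => exact mem_lowering.2 fun b m hm => hm
  | cons D l ih =>
    rw [List.prod_cons, List.length_cons, add_comm]
    exact mul_mem_lowering (h D List.mem_cons_self) (ih fun D' hD' => h D' (.tail D hD'))

theorem map_mem_supported_of_mem_lowering {n : ℕ} (hD : D ∈ lowering K wt n) {m : ι →₀ K}
    (hm : m ∈ Finsupp.supported K K {i | wt i ≤ b + n}) :
    D m ∈ Finsupp.supported K K {i | wt i ≤ b} := by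
  simp only [← Nat.lt_succ_iff] at hm ⊢
  exact mem_lowering.1 hD _ m (by rwa [Nat.succ_add])

theorem exists_apply_eq_zero_of_mem_lowering (wt : ι → ℕ) (m : ι →₀ K) :
    ∃ n, ∀ D ∈ lowering K wt n, D m = 0 := by
  refine ⟨m.support.sup wt + 1, fun D hD => ?_⟩
  have : D m ∈ Finsupp.supported K K {i | wt i < 0} := mem_lowering.1 hD 0 m fun i hi =>
    (Nat.lt_succ_of_le (Finset.le_sup hi)).trans_eq (zero_add _).symm
  simpa using this

variable {c : ι → K}

theorem IsTriangular.mem_lowering {g : Module.End K (ι →₀ K)} (h : IsTriangular wt c g) :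
    g ∈ lowering K wt 0 := by
  refine _root_.mem_lowering.2 fun b m hm => (Finsupp.mem_supported' K _).2 fun i hi => ?_
  have hi : b ≤ wt i := not_lt.1 hi
  rw [h i m fun j hj => (hm hj).le.trans hi, (Finsupp.mem_supported' K m).1 hm i hi.not_gt,
    mul_zero]

theorem IsTriangular.add_mem_lowering {g : Module.End K (ι →₀ K)} (h : IsTriangular wt c g)
    (hD : D ∈ lowering K wt 1) : IsTriangular wt c (g + D) := fun i m hm => by
  have : D m i = 0 := (Finsupp.mem_supported' K _).1
    (_root_.mem_lowering.1 hD (wt i) m fun j hj => Nat.lt_succ_of_le (hm hj)) i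
      (lt_irrefl (wt i))
  rw [LinearMap.add_apply, Finsupp.add_apply, h i m hm, this, add_zero]

end Lowering

section Strip

variable {K α : Type*} [CommRing K]

variable (K) in
/-- The operator on `List α →₀ K`, the free module on the words in `α`, that removes the first
letter of a word starting with `i` and kills the other words. -/
noncomputable def strip (i : α) : Module.End K (List α →₀ K) :=
  Finsupp.lcomapDomain (List.cons i) List.cons_injective

@[simp]
theorem strip_apply (i : α) (m : List α →₀ K) (w : List α) : strip K i m w = m (i :: w) :=
  rfl

theorem strip_single_cons_self (i : α) (w : List α) :
    strip K i (Finsupp.single (i :: w) 1) = Finsupp.single w 1 :=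
  Finsupp.comapDomain_single _ _ _ _

theorem strip_single_of_head_ne {i : α} {w : List α} (h : w.head? ≠ some i) :
    strip K i (Finsupp.single w 1) = 0 := by
  classical
  ext v
  rw [strip_apply, Finsupp.single_apply, if_neg (by rintro rfl; simp at h), Finsupp.zero_apply]

theorem strip_mem_lowering {wt : List α → ℕ} {i : α} {n : ℕ}
    (h : ∀ w, wt (i :: w) = wt w + n) : strip K i ∈ lowering K wt n :=
  mem_lowering.2 fun b m hm w hw => by
    have : wt (i :: w) < b + n := hm <| by simpa using hw
    rw [h] at this
    exact Nat.lt_of_add_lt_add_right this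

variable [Fintype α]

/-- The operator `∑ i, v i • strip K i` attached to a vector `v`; it is the degree one part of the
operator `1 + stripSum v` that represents an element of a free group whose image in the
abelianization is `v`. -/
noncomputable def stripSum : (α → K) →ₗ[K] Module.End K (List α →₀ K) :=
  Fintype.linearCombination K (strip K)

theorem stripSum_apply (v : α → K) (m : List α →₀ K) (w : List α) :
    stripSum v m w = ∑ i, v i * m (i :: w) := by
  simp [stripSum, Fintype.linearCombination_apply, Finsupp.finsetSum_apply]

theorem stripSum_single [DecidableEq α] (i : α) :
    stripSum (Pi.single i 1) = strip K i := by
  simp [stripSum]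

theorem stripSum_mem_lowering {wt : List α → ℕ} {n : ℕ} {v : α → K}
    (h : ∀ i, v i ≠ 0 → strip K i ∈ lowering K wt n) : stripSum v ∈ lowering K wt n := by
  refine Submodule.sum_mem _ fun i _ => ?_
  by_cases hi : v i = 0
  · simp [hi]
  · exact Submodule.smul_mem _ _ (h i hi)

/-- `strip` makes `List α →₀ K` cofree: the coordinate of `S m` at a word is `ε` of the
corresponding composite of values of `Ψ`, applied to `m`. -/
theorem exists_intertwiner {ι : Type*} {wt : ι → ℕ} (ε : (ι →₀ K) →ₗ[K] K)
    {Ψ : (α → K) →ₗ[K] Module.End K (ι →₀ K)} (hΨ : ∀ v, Ψ v ∈ lowering K wt 1) :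
    ∃ S : (ι →₀ K) →ₗ[K] List α →₀ K,
      (∀ m, S m [] = ε m) ∧ ∀ v m, stripSum v (S m) = S (Ψ v m) := by
  classical
  let Z (w : List α) : Module.End K (ι →₀ K) := (w.map fun i => Ψ (Pi.single i 1)).reverse.prod
  have hfin (m : ι →₀ K) : (Function.support fun w => ε (Z w m)).Finite := by
    obtain ⟨n, hn⟩ := exists_apply_eq_zero_of_mem_lowering wt m
    refine (List.finite_length_lt α n).subset fun w hw => ?_
    by_contra hlen
    have hZ : Z w ∈ lowering K wt w.length := by
      simpa [Z] using list_prod_mem_lowering (l := (w.map fun i => Ψ (Pi.single i 1)).reverse)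
        (by simp [hΨ])
    exact hw (by simp [hn _ (lowering_anti (not_lt.1 hlen) hZ)])
  let S : (ι →₀ K) →ₗ[K] List α →₀ K :=
    { toFun m := Finsupp.ofSupportFinite (fun w => ε (Z w m)) (hfin m)
      map_add' m m' := by ext; simp [Finsupp.ofSupportFinite_coe]
      map_smul' a m := by ext; simp [Finsupp.ofSupportFinite_coe] }
  have hS (m w) : S m w = ε (Z w m) := rfl
  refine ⟨S, fun m => by simp [hS, Z], fun v m => ?_⟩
  ext w
  have hΨv : Ψ v m = ∑ i, v i • Ψ (Pi.single i 1) m := by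
    conv_lhs => rw [← Finset.univ_sum_single v, map_sum, LinearMap.sum_apply]
    refine Finset.sum_congr rfl fun i _ => ?_
    rw [← LinearMap.smul_apply, ← map_smul, ← Pi.single_smul, smul_eq_mul, mul_one]
  simp [stripSum_apply, hΨv, hS, Z]

end Strip

section Magnus

theorem zpow_smul_eq_add_zsmul {G M : Type*} [Group G] [AddCommGroup M] [DistribMulAction G M]
    {u : G} {m n : M} (hm : u • m = m + n) (hn : u • n = n) (e : ℤ) :
    u ^ e • m = m + e • n := by
  have hfix (e : ℤ) : u ^ e • n = n :=
    MulAction.mem_stabilizer_iff.1 (zpow_mem (MulAction.mem_stabilizer_iff.2 hn) e)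
  have hm' : u⁻¹ • m = m - n := by rw [inv_smul_eq_iff, smul_sub, hm, hn, add_sub_cancel_right]
  induction e with
  | zero => simp
  | succ k ih => rw [zpow_add_one, mul_smul, hm, smul_add, ih, hfix, add_smul, one_smul, add_assoc]
  | pred k ih =>
    rw [zpow_sub_one, mul_smul, hm', smul_sub, ih, hfix, sub_smul, one_smul, add_sub_assoc]

theorem exists_syllables {α : Type*} (f : FreeGroup α) :
    ∃ l : List (α × ℤ), (∀ p ∈ l, p.2 ≠ 0) ∧ (l.map Prod.fst).IsChain (· ≠ ·) ∧
      f = (l.map fun p => FreeGroup.of p.1 ^ p.2).prod := by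
  classical
  let w := Monoid.CoprodI.Word.equiv (freeGroupEquivCoprodI f)
  have hw : w.prod = freeGroupEquivCoprodI f := Monoid.CoprodI.Word.equiv.symm_apply_apply _
  refine ⟨w.toList.map fun s => (s.1, FreeGroup.freeGroupUnitEquivInt s.2), ?_, ?_, ?_⟩
  · simp only [List.forall_mem_map]
    exact fun s hs h => w.ne_one s hs (FreeGroup.freeGroupUnitEquivInt.injective h)
  · rw [List.map_map, List.isChain_map]
    exact w.chain_ne
  · rw [← freeGroupEquivCoprodI.symm_apply_apply f, ← hw, Monoid.CoprodI.Word.prod, map_list_prod,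
      List.map_map, List.map_map]
    congr 1
    refine List.map_congr_left fun s _ => ?_
    have hs : s.2 = FreeGroup.of () ^ FreeGroup.freeGroupUnitEquivInt s.2 :=
      (FreeGroup.freeGroupUnitEquivInt.symm_apply_apply s.2).symm
    conv_lhs => rw [Function.comp_apply, hs]
    simp [freeGroupEquivCoprodI]

variable {K α : Type*} [CommRing K] {u : α → (Module.End K (List α →₀ K))ˣ}

theorem zpow_smul_single_cons_self (hu : ∀ i, (u i : Module.End K (List α →₀ K)) = 1 + strip K i)
    {i : α} {v : List α} (hv : v.head? ≠ some i) (e : ℤ) :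
    (u i ^ e • Finsupp.single (i :: v) 1 : List α →₀ K) =
      Finsupp.single (i :: v) 1 + e • Finsupp.single v 1 := by
  have hcons : u i • (Finsupp.single (i :: v) 1 : List α →₀ K) =
      Finsupp.single (i :: v) 1 + Finsupp.single v 1 := by
    simp [Units.smul_def, hu, strip_single_cons_self]
  have hfix : u i • (Finsupp.single v 1 : List α →₀ K) = Finsupp.single v 1 := by
    simp [Units.smul_def, hu, strip_single_of_head_ne hv]
  exact zpow_smul_eq_add_zsmul (M := List α →₀ K) hcons hfix e

theorem zpow_smul_single_of_head_ne (hu : ∀ i, (u i : Module.End K (List α →₀ K)) = 1 + strip K i)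
    {i : α} {v : List α} (hv : v.head? ≠ some i) (e : ℤ) :
    u i ^ e • Finsupp.single v (1 : K) = Finsupp.single v 1 :=
  MulAction.mem_stabilizer_iff.1 <| zpow_mem (MulAction.mem_stabilizer_iff.2
    (by simp [Units.smul_def, hu, strip_single_of_head_ne hv])) e

theorem syllables_smul_single_apply_nil [DecidableEq α]
    (hu : ∀ i, (u i : Module.End K (List α →₀ K)) = 1 + strip K i) (l : List (α × ℤ)) :
    ∀ v : List α, v.IsChain (· ≠ ·) → l.length ≤ v.length →
      ((l.map fun p => u p.1 ^ p.2).prod • Finsupp.single v (1 : K) : List α →₀ K) [] =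
        if v = (l.map Prod.fst).reverse then (((l.map Prod.snd).prod : ℤ) : K) else 0 := by
  induction l using List.reverseRecOn with
  | nil => simp [Finsupp.single_apply]
  | append_singleton l p ih =>
    rintro (_ | ⟨j, v⟩) hv hlen
    · simp at hlen
    replace hlen : l.length ≤ v.length := by simpa using hlen
    rw [List.map_append, List.prod_append, List.map_singleton, List.prod_singleton, mul_smul]
    have hlong : j :: v ≠ (l.map Prod.fst).reverse := fun h => by
      have := congrArg List.length h
      simp at this
      lia
    by_cases hj : j = p.1
    · subst hj
      rw [List.isChain_cons] at hv
      rw [zpow_smul_single_cons_self hu fun h => hv.1 _ h rfl, smul_add, Finsupp.add_apply,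
        ih _ (List.isChain_cons.2 hv) (hlen.trans (Nat.le_succ _)), if_neg hlong, zero_add,
        smul_comm, Finsupp.smul_apply, ih v hv.2 hlen]
      simp [mul_comm]
    · rw [zpow_smul_single_of_head_ne hu (by simpa using hj),
        ih _ hv (hlen.trans (Nat.le_succ _)), if_neg hlong, if_neg (by simp [hj])]

theorem exists_lift_smul_apply_nil_ne [CharZero K]
    (hu : ∀ i, (u i : Module.End K (List α →₀ K)) = 1 + strip K i) {f : FreeGroup α}
    (hf : f ≠ 1) : ∃ m : List α →₀ K, (FreeGroup.lift u f • m) [] ≠ m [] := by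
  classical
  obtain ⟨l, hl0, hchain, rfl⟩ := exists_syllables f
  have hl : l ≠ [] := by
    rintro rfl
    simp at hf
  refine ⟨Finsupp.single (l.map Prod.fst).reverse 1, ?_⟩
  have hprod : FreeGroup.lift u (l.map fun p => FreeGroup.of p.1 ^ p.2).prod =
      (l.map fun p => u p.1 ^ p.2).prod := by
    simp [map_list_prod, Function.comp_def]
  have hchain' : (l.map Prod.fst).reverse.IsChain (· ≠ ·) :=
    List.isChain_reverse.2 (hchain.imp fun _ _ h => h.symm)
  rw [hprod, syllables_smul_single_apply_nil hu l _ hchain' (by simp), if_pos rfl,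
    Finsupp.single_eq_of_ne (by simpa using hl.symm)]
  refine Int.cast_ne_zero.2 (List.prod_ne_zero fun h => ?_)
  obtain ⟨p, hp, hp0⟩ := List.mem_map.1 h
  exact hl0 p hp hp0

theorem lift_injective_of_linearIndependent {K α β : Type*} [Field K] [CharZero K] [Fintype α]
    [Finite β] {v : β → α → K} (hv : LinearIndependent K v)
    {U : β → (Module.End K (List α →₀ K))ˣ}
    (hU : ∀ j, (U j : Module.End K (List α →₀ K)) = 1 + stripSum (v j)) :
    Function.Injective (FreeGroup.lift U) := by
  classical
  cases nonempty_fintype β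
  have hlow (w : β → K) : stripSum w ∈ lowering K (List.length (α := β)) 1 :=
    stripSum_mem_lowering fun i _ => strip_mem_lowering fun _ => rfl
  choose u hu using fun j : β => (IsTriangular.one.add_mem_lowering (stripSum_single (K := K) j ▸
    hlow _)).isUnit fun _ => one_ne_zero
  obtain ⟨ψ, hψ⟩ := (Fintype.linearCombination K v).exists_leftInverse_of_injective
    (LinearMap.ker_eq_bot.2 (hv.fintypeLinearCombination_injective))
  have hψv (j : β) : ψ (v j) = Pi.single j 1 := by
    simpa using LinearMap.congr_fun hψ (Pi.single j 1)
  obtain ⟨S, hSnil, hS⟩ := exists_intertwiner (Finsupp.lapply []) (Ψ := stripSum ∘ₗ ψ)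
    fun w => hlow (ψ w)
  have hSu (j : β) (m : List β →₀ K) : U j • S m = S (u j • m) := by
    simp [Units.smul_def, hU, hu, hS, hψv, stripSum_single]
  have hSlift (f : FreeGroup β) (m : List β →₀ K) :
      FreeGroup.lift U f • S m = S (FreeGroup.lift u f • m) := by
    induction f generalizing m with
    | C1 => simp
    | of j => simpa using hSu j m
    | inv_of j _ => simp [inv_smul_eq_iff, hSu]
    | mul f g hf hg => rw [map_mul, map_mul, mul_smul, mul_smul, hg, hf]
  refine (injective_iff_map_eq_one _).2 fun f hf => by_contra fun hne => ?_
  obtain ⟨m, hm⟩ := exists_lift_smul_apply_nil_ne hu hne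
  refine hm ?_
  simpa [hf, hSnil] using (DFunLike.congr_fun (hSlift f m) []).symm

end Magnus

section Conjugator

/-- The weight on words in `k` letters in which the `i`-th letter has weight `k + i`. Any two
letters together are heavier than any single letter. -/
def letterWeight (k : ℕ) (w : List (Fin k)) : ℕ :=
  (w.map fun i => k + i.val).sum

variable {k : ℕ}

theorem letterWeight_cons (i : Fin k) (w : List (Fin k)) :
    letterWeight k (i :: w) = letterWeight k w + (k + i) := by
  simp [letterWeight, add_comm]

variable {K : Type*} [CommRing K]

theorem stripSum_mem_lowering_letterWeight {v : Fin k → K} {n : ℕ}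
    (h : ∀ i, v i ≠ 0 → n ≤ k + i) : stripSum v ∈ lowering K (letterWeight k) n :=
  stripSum_mem_lowering fun i hi =>
    lowering_anti (h i hi) (strip_mem_lowering fun w => letterWeight_cons i w)

theorem stripSum_mem_lowering_one (v : Fin k → K) :
    stripSum v ∈ lowering K (letterWeight k) 1 :=
  stripSum_mem_lowering_letterWeight fun i _ => by lia

theorem one_add_stripSum_smul_single_nil {u : (Module.End K (List (Fin k) →₀ K))ˣ}
    {v : Fin k → K} (hu : (u : Module.End K (List (Fin k) →₀ K)) = 1 + stripSum v) :
    u • (Finsupp.single [] 1 : List (Fin k) →₀ K) = Finsupp.single [] 1 := by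
  have : stripSum v (Finsupp.single [] 1 : List (Fin k) →₀ K) = 0 := by
    ext w
    simp [stripSum_apply]
  simp [Units.smul_def, hu, this]

theorem exists_lift_eq_one_add_stripSum_add {β : Type*}
    {U : β → (Module.End K (List (Fin k) →₀ K))ˣ} {v : β → Fin k → K}
    (hU : ∀ j, (U j : Module.End K (List (Fin k) →₀ K)) = 1 + stripSum (v j))
    (hU' : ∀ j, (↑(U j)⁻¹ : Module.End K (List (Fin k) →₀ K)) ∈ lowering K (letterWeight k) 0)
    (f : FreeGroup β) :
    ∃ E ∈ lowering K (letterWeight k) (k + k),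
      (FreeGroup.lift U f : Module.End K (List (Fin k) →₀ K)) =
        1 + stripSum (FreeGroup.lift (Multiplicative.ofAdd ∘ v) f).toAdd + E := by
  have hstrip (x : Fin k → K) : stripSum x ∈ lowering K (letterWeight k) k :=
    stripSum_mem_lowering_letterWeight fun i _ => by lia
  induction f with
  | C1 => exact ⟨0, zero_mem _, by simp⟩
  | of j => exact ⟨0, zero_mem _, by simp [hU]⟩
  | inv_of j _ =>
    refine ⟨stripSum (v j) * (stripSum (v j) * ↑(U j)⁻¹),
      mul_mem_lowering (hstrip _) (mul_mem_lowering_right (hstrip _) (hU' j)),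
      LinearMap.ext fun m => ?_⟩
    have hm : (1 + stripSum (v j)) ((U j)⁻¹ • m) = m := by
      rw [← hU, ← Module.End.smul_def, ← Units.smul_def, smul_inv_smul]
    rw [Units.smul_def, Module.End.smul_def] at hm
    simp only [map_inv, FreeGroup.lift_apply_of, Function.comp_apply, toAdd_inv, toAdd_ofAdd,
      map_neg, LinearMap.add_apply, LinearMap.neg_apply, Module.End.one_apply,
      Module.End.mul_apply] at hm ⊢
    generalize (↑(U j)⁻¹ : Module.End K (List (Fin k) →₀ K)) m = m' at hm ⊢
    rw [← hm, map_add]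
    abel
  | mul f g hf hg =>
    obtain ⟨E, hE, hf⟩ := hf
    obtain ⟨E', hE', hg⟩ := hg
    have hadd (h : FreeGroup β) {F} (hF : F ∈ lowering K (letterWeight k) (k + k)) :
        stripSum (FreeGroup.lift (Multiplicative.ofAdd ∘ v) h).toAdd + F ∈
          lowering K (letterWeight k) k :=
      add_mem (hstrip _) (lowering_anti (by lia) hF)
    refine ⟨E + E' + _, add_mem (add_mem hE hE') (mul_mem_lowering (hadd f hE) (hadd g hE')), ?_⟩
    rw [map_mul, map_mul, Units.val_mul, hf, hg, toAdd_mul, map_add]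
    refine LinearMap.ext fun m => ?_
    simp only [LinearMap.add_apply, Module.End.mul_apply, Module.End.one_apply, map_add]
    abel

section LowerTriangular

variable {M : Matrix (Fin k) (Fin k) K}

theorem stripSum_col_mem_lowering (hM : ∀ i j, i < j → M i j = 0) (i : Fin k) :
    stripSum (M.col i) ∈ lowering K (letterWeight k) (k + i) :=
  stripSum_mem_lowering_letterWeight fun l hl => by
    by_contra hlt
    exact hl (hM l i (by lia))

theorem stripSum_col_apply_of_mem_supported (hM : ∀ i j, i < j → M i j = 0) {i : Fin k}
    {w : List (Fin k)} {m : List (Fin k) →₀ K}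
    (hm : m ∈ Finsupp.supported K K {j | letterWeight k j ≤ letterWeight k (i :: w)}) :
    stripSum (M.col i) m w = M i i * m (i :: w) := by
  rw [stripSum_apply]
  refine Finset.sum_eq_single i (fun l _ hli => ?_) (by simp)
  rcases lt_or_gt_of_ne hli with hlt | hlt
  · rw [Matrix.col_apply, hM l i hlt, zero_mul]
  · rw [(Finsupp.mem_supported' K m).1 hm _ (by simpa [letterWeight_cons] using hlt), mul_zero]

open Matrix in
theorem exists_isTriangular_conjugator (hM : ∀ i j, i < j → M i j = 0)
    {E : Module.End K (List (Fin k) →₀ K)}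
    (hE : E ∈ lowering K (letterWeight k) (k + k)) (ℓ : (Fin k → K) →ₗ[K] K) :
    ∃ S : Module.End K (List (Fin k) →₀ K),
      IsTriangular (letterWeight k) (fun w => (w.map fun i => M i i).prod) S ∧
      ∀ v m, stripSum v (S m) = S (stripSum (M *ᵥ v) m + ℓ v • E m) := by
  let Ψ : (Fin k → K) →ₗ[K] Module.End K (List (Fin k) →₀ K) :=
    stripSum ∘ₗ M.mulVecLin + ℓ.smulRight E
  have hΨ (v) : Ψ v ∈ lowering K (letterWeight k) 1 := by
    rcases k.eq_zero_or_pos with rfl | hk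
    · rw [Subsingleton.elim v 0, map_zero]
      exact zero_mem _
    · exact add_mem (stripSum_mem_lowering_one _)
        (Submodule.smul_mem _ _ (lowering_anti (by lia) hE))
  have hΨ_single (i) : Ψ (Pi.single i 1) = stripSum (M.col i) + ℓ (Pi.single i 1) • E := by
    simp [Ψ]
  obtain ⟨S, hSnil, hS⟩ := exists_intertwiner (Finsupp.lapply []) hΨ
  refine ⟨S, fun w => ?_, hS⟩
  induction w with
  | nil => simp [hSnil]
  | cons i w ih =>
    intro m hm
    have hEm : E m w = 0 := by
      have hw : letterWeight k (i :: w) < letterWeight k w + (k + k) := by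
        rw [letterWeight_cons]
        lia
      have hlt : m ∈ Finsupp.supported K K {j | letterWeight k j < letterWeight k w + (k + k)} :=
        fun j hj => (hm hj).trans_lt hw
      exact (Finsupp.mem_supported' K _).1 (mem_lowering.1 hE _ m hlt) w
        (lt_irrefl (letterWeight k w))
    have hΨm : Ψ (Pi.single i 1) m ∈
        Finsupp.supported K K {j | letterWeight k j ≤ letterWeight k w} := by
      rw [hΨ_single]
      exact map_mem_supported_of_mem_lowering (add_mem (stripSum_col_mem_lowering hM i)
        (Submodule.smul_mem _ _ (lowering_anti (by lia) hE)))
        (by simpa [letterWeight_cons] using hm)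
    calc S m (i :: w) = S (Ψ (Pi.single i 1) m) w := by
          rw [← strip_apply, ← stripSum_single, hS]
      _ = (w.map fun i => M i i).prod * Ψ (Pi.single i 1) m w := ih _ hΨm
      _ = ((i :: w).map fun i => M i i).prod * m (i :: w) := by
          simp [hΨ_single, stripSum_col_apply_of_mem_supported hM hm, hEm, mul_assoc,
            mul_left_comm]

end LowerTriangular

end Conjugator

section Recursion

/-- The conjugates `t ^ (-z) * x * t ^ z` of `x`, denoted `x_z` in the theory of relators with
`t`-exponent sum zero. -/
def conjSeq {G : Type*} [Group G] (x t : G) (z : ℤ) : G :=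
  t ^ (-z) * x * t ^ z

theorem conjSeq_zero {G : Type*} [Group G] (x t : G) : conjSeq x t 0 = x := by
  simp [conjSeq]

theorem conjSeq_conjSeq {G : Type*} [Group G] (x t : G) (z z' : ℤ) :
    conjSeq (conjSeq x t z) t z' = conjSeq x t (z + z') := by
  simp only [conjSeq]
  group

theorem conjSeq_add_one {G : Type*} [Group G] (x t : G) (z : ℤ) :
    conjSeq x t (z + 1) = t⁻¹ * conjSeq x t z * t := by
  simp only [conjSeq]
  group

theorem map_conjSeq {G H : Type*} [Group G] [Group H] (φ : G →* H) (x t : G) (z : ℤ) :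
    φ (conjSeq x t z) = conjSeq (φ x) (φ t) z := by
  simp [conjSeq]

theorem conjSeq_eq_of_forall_lt {G : Type*} [Group G] {t : G} {u : ℕ → G} {k : ℕ}
    (hu : ∀ j < k, u (j + 1) = t⁻¹ * u j * t) {j : ℕ} (hj : j ≤ k) : conjSeq (u 0) t j = u j := by
  induction j with
  | zero => simp [conjSeq_zero]
  | succ j ih => rw [Nat.cast_succ, conjSeq_add_one, ih (by lia), hu j hj]

variable {K : Type*} [Field K] [LinearOrder K] [IsStrictOrderedRing K] {k : ℕ}

theorem exists_mem_triangularGroup_eq_one_add_stripSum (v : Fin k → K) :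
    ∃ u ∈ triangularGroup K (letterWeight k),
      (u : Module.End K (List (Fin k) →₀ K)) = 1 + stripSum v := by
  have htri := IsTriangular.one.add_mem_lowering (stripSum_mem_lowering_one v)
  obtain ⟨u, hu⟩ := htri.isUnit fun _ => one_ne_zero
  exact ⟨u, ⟨1, fun _ => one_pos, hu ▸ htri⟩, hu⟩

open Matrix in
theorem exists_mem_triangularGroup_conjugator {M : Matrix (Fin k) (Fin k) K}
    (hM : ∀ i j, i < j → M i j = 0) (hpos : ∀ i, 0 < M i i)
    {E : Module.End K (List (Fin k) →₀ K)}
    (hE : E ∈ lowering K (letterWeight k) (k + k)) (ℓ : (Fin k → K) →ₗ[K] K) :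
    ∃ T ∈ triangularGroup K (letterWeight k),
      T • (Finsupp.single [] 1 : List (Fin k) →₀ K) = (2 : K) • Finsupp.single [] 1 ∧
      ∀ v, stripSum v * (T : Module.End K (List (Fin k) →₀ K)) =
        T * (stripSum (M *ᵥ v) + ℓ v • E) := by
  obtain ⟨S, htri, hS⟩ := exists_isTriangular_conjugator hM hE ℓ
  replace htri := htri.smul 2
  have hdiag (w : List (Fin k)) :
      0 < ((2 : K) • fun w : List (Fin k) => (w.map fun i => M i i).prod) w :=
    mul_pos two_pos (List.prod_pos (by simpa using fun i _ => hpos i))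
  obtain ⟨T, hT⟩ := htri.isUnit fun w => (hdiag w).ne'
  refine ⟨T, ⟨_, hdiag, hT ▸ htri⟩, ?_, fun v => LinearMap.ext fun m => ?_⟩
  · rw [Units.smul_def, hT, Module.End.smul_def,
      htri.apply_single_of_le fun w => by simp [letterWeight]]
    simp
  · simp [hT, hS]

open Matrix in
theorem exists_mem_triangularGroup_conjSeq_eq {M : Matrix (Fin k) (Fin k) K}
    (hM : ∀ i j, i < j → M i j = 0) (hpos : ∀ i, 0 < M i i) {v₀ : Fin k → K}
    (hv₀ : LinearIndependent K fun j : Fin k => (M ^ j.val) *ᵥ v₀)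
    {E : Module.End K (List (Fin k) →₀ K)} (hE : E ∈ lowering K (letterWeight k) (k + k))
    {u : ℕ → (Module.End K (List (Fin k) →₀ K))ˣ}
    (hu : ∀ j < k, (u j : Module.End K (List (Fin k) →₀ K)) = 1 + stripSum ((M ^ j) *ᵥ v₀))
    (huk : (u k : Module.End K (List (Fin k) →₀ K)) = 1 + stripSum ((M ^ k) *ᵥ v₀) + E) :
    ∃ T ∈ triangularGroup K (letterWeight k),
      T • (Finsupp.single [] 1 : List (Fin k) →₀ K) = (2 : K) • Finsupp.single [] 1 ∧
      ∀ j ≤ k, conjSeq (u 0) T j = u j := by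
  obtain ⟨ℓ, hℓ⟩ : ∃ ℓ : (Fin k → K) →ₗ[K] K,
      ∀ j : Fin k, ℓ ((M ^ j.val) *ᵥ v₀) = if j.val + 1 = k then 1 else 0 := by
    let b := Module.Basis.mk hv₀ (hv₀.span_eq_top_of_card_eq_finrank' (by simp)).ge
    exact ⟨b.constr K fun j => if j.val + 1 = k then 1 else 0, fun j => by
      simpa [b] using b.constr_basis K (fun j : Fin k => if j.val + 1 = k then (1 : K) else 0) j⟩
  obtain ⟨T, hTmem, hTnil, hT⟩ := exists_mem_triangularGroup_conjugator hM hpos hE ℓ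
  refine ⟨T, hTmem, hTnil, fun j hj => conjSeq_eq_of_forall_lt (fun j hj => ?_) hj⟩
  have hsucc : (u (j + 1) : Module.End K (List (Fin k) →₀ K)) =
      1 + (stripSum (M *ᵥ ((M ^ j) *ᵥ v₀)) + ℓ ((M ^ j) *ᵥ v₀) • E) := by
    rw [mulVec_mulVec, ← pow_succ', hℓ ⟨j, hj⟩]
    rcases Nat.lt_or_eq_of_le (Nat.succ_le_of_lt hj) with hlt | rfl
    · simp [hlt.ne, hu _ hlt]
    · simp [huk, add_assoc]
  rw [mul_assoc, eq_inv_mul_iff_mul_eq]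
  ext1
  rw [Units.val_mul, Units.val_mul, hsucc, hu j hj, mul_add, add_mul, hT, one_mul, mul_one]

open Matrix in
theorem exists_mem_triangularGroup_conjSeq {M : Matrix (Fin k) (Fin k) K}
    (hM : ∀ i j, i < j → M i j = 0) (hpos : ∀ i, 0 < M i i) {v₀ : Fin k → K}
    (hv₀ : LinearIndependent K fun j : Fin k => (M ^ j.val) *ᵥ v₀) {r : FreeGroup (Fin k)}
    (hr : FreeGroup.lift (fun j : Fin k => Multiplicative.ofAdd ((M ^ j.val) *ᵥ v₀)) r =
      Multiplicative.ofAdd ((M ^ k) *ᵥ v₀)) :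
    ∃ X ∈ triangularGroup K (letterWeight k), ∃ T ∈ triangularGroup K (letterWeight k),
      X • (Finsupp.single [] 1 : List (Fin k) →₀ K) = Finsupp.single [] 1 ∧
      T • (Finsupp.single [] 1 : List (Fin k) →₀ K) = (2 : K) • Finsupp.single [] 1 ∧
      Function.Injective (FreeGroup.lift fun j : Fin k => conjSeq X T j) ∧
      conjSeq X T k = FreeGroup.lift (fun j : Fin k => conjSeq X T j) r := by
  choose U hUmem hU using fun j : Fin k =>
    exists_mem_triangularGroup_eq_one_add_stripSum ((M ^ j.val) *ᵥ v₀)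
  obtain ⟨E, hE, hrE⟩ := exists_lift_eq_one_add_stripSum_add hU (fun j => by
    obtain ⟨_, -, hinv⟩ := inv_mem (hUmem j)
    exact hinv.mem_lowering) r
  rw [Function.comp_def, hr, toAdd_ofAdd] at hrE
  let V (j : ℕ) := if h : j < k then U ⟨j, h⟩ else FreeGroup.lift U r
  have hVlt (j : Fin k) : V j = U j := by simp [V]
  have hVk : V k = FreeGroup.lift U r := by simp [V]
  have hV_mem (H : Subgroup (Module.End K (List (Fin k) →₀ K))ˣ) (hH : ∀ j, U j ∈ H) (j : ℕ) :
      V j ∈ H := by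
    simp only [V]
    split_ifs
    · exact hH _
    · exact FreeGroup.range_lift_le (Set.range_subset_iff.2 hH) ⟨r, rfl⟩
  obtain ⟨T, hTmem, hTnil, hT⟩ := exists_mem_triangularGroup_conjSeq_eq hM hpos hv₀ hE (u := V)
    (fun j hj => by rw [hVlt ⟨j, hj⟩, hU]) (by rw [hVk, hrE])
  have hTU : (fun j : Fin k => conjSeq (V 0) T j) = U := funext fun j => by
    rw [hT j j.is_le', hVlt]
  refine ⟨V 0, hV_mem _ hUmem 0, T, hTmem, ?_, hTnil, ?_, ?_⟩
  · exact hV_mem (MulAction.stabilizer _ (Finsupp.single [] 1 : List (Fin k) →₀ K))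
      (fun j => one_add_stripSum_smul_single_nil (hU j)) 0
  · rw [hTU]
    exact lift_injective_of_linearIndependent hv₀ hU
  · rw [hTU, hT k le_rfl, hVk]

end Recursion

section CyclicVector

open Matrix Polynomial

variable {R : Type*} [CommRing R] {k : ℕ}

/-- The lower triangular matrix with `a 0, …, a (k - 1)` on the diagonal and ones below it, for
which the first coordinate vector is cyclic. -/
def lowerBidiagonal (k : ℕ) (a : ℕ → R) : Matrix (Fin k) (Fin k) R :=
  of fun l i => if l = i then a i else if l.val = i + 1 then 1 else 0

theorem lowerBidiagonal_apply_self (a : ℕ → R) (i : Fin k) : lowerBidiagonal k a i i = a i :=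
  if_pos rfl

theorem lowerBidiagonal_apply_of_lt (a : ℕ → R) {i j : Fin k} (h : i < j) :
    lowerBidiagonal k a i j = 0 :=
  (if_neg h.ne).trans (if_neg (by lia))

/-- The `i`-th coordinate vector of `Fin k → R`, equal to zero when `k ≤ i`. -/
def coordVec (R : Type*) [CommRing R] (k i : ℕ) : Fin k → R :=
  fun l => if l.val = i then 1 else 0

theorem coordVec_self : coordVec R k k = 0 :=
  funext fun l => if_neg l.isLt.ne

theorem coordVec_val (i : Fin k) : coordVec R k i = Pi.single i 1 := by
  ext l
  simp [coordVec, Pi.single_apply, Fin.ext_iff]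

theorem lowerBidiagonal_mulVec_coordVec (a : ℕ → R) (i : ℕ) :
    lowerBidiagonal k a *ᵥ coordVec R k i = a i • coordVec R k i + coordVec R k (i + 1) := by
  rcases lt_or_ge i k with hi | hi
  · lift i to Fin k using hi
    rw [coordVec_val, mulVec_single_one]
    ext l
    by_cases hl : l = i <;> simp [lowerBidiagonal, coordVec, hl]
  · have hzero (j : ℕ) (hj : k ≤ j) : coordVec R k j = 0 :=
      funext fun l => if_neg (l.isLt.trans_le hj).ne
    simp [hzero i hi, hzero (i + 1) (by lia)]

theorem aeval_prod_lowerBidiagonal_mulVec (a : ℕ → R) (j : ℕ) :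
    aeval (lowerBidiagonal k a) (∏ i ∈ Finset.range j, (X - C (a i))) *ᵥ coordVec R k 0 =
      coordVec R k j := by
  induction j with
  | zero => simp
  | succ j ih =>
    rw [Finset.prod_range_succ_comm, map_mul, ← mulVec_mulVec, ih, map_sub, aeval_X, aeval_C,
      sub_mulVec, lowerBidiagonal_mulVec_coordVec, Algebra.algebraMap_eq_smul_one, smul_mulVec,
      one_mulVec, add_sub_cancel_left]

theorem linearIndependent_lowerBidiagonal_pow_mulVec {K : Type*} [Field K] (a : ℕ → K) :
    LinearIndependent K fun j : Fin k => (lowerBidiagonal k a ^ j.val) *ᵥ coordVec K k 0 := by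
  refine linearIndependent_of_top_le_span_of_card_eq_finrank ?_ (by simp)
  rw [← (Pi.basisFun K (Fin k)).span_eq, Submodule.span_le]
  rintro _ ⟨i, rfl⟩
  have hdeg : (∏ l ∈ Finset.range i, (X - C (a l))).natDegree < k := by
    simp [natDegree_prod_of_monic, monic_X_sub_C]
  rw [Pi.basisFun_apply, ← coordVec_val, ← aeval_prod_lowerBidiagonal_mulVec a i,
    aeval_eq_sum_range' hdeg, sum_mulVec]
  refine Submodule.sum_mem _ fun j hj => ?_
  rw [smul_mulVec]
  exact Submodule.smul_mem _ _ (Submodule.subset_span ⟨⟨j, Finset.mem_range.1 hj⟩, rfl⟩)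

end CyclicVector

section Roots

open Polynomial

theorem exists_eq_prod_range_X_sub_C {K : Type*} [Field K] {p : K[X]} (hp : p.Monic)
    (hsplits : p.Splits) :
    ∃ a : ℕ → K, (∀ i < p.natDegree, p.IsRoot (a i)) ∧
      p = ∏ i ∈ Finset.range p.natDegree, (X - C (a i)) := by
  set l := p.roots.toList with hl
  have hlen : p.natDegree = l.length := by
    rw [hl, Multiset.length_toList, hsplits.natDegree_eq_card_roots]
  refine ⟨fun i => l.getD i 0, fun i hi => ?_, ?_⟩
  · beta_reduce
    rw [List.getD_eq_getElem _ _ (hlen ▸ hi)]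
    exact isRoot_of_mem_roots (Multiset.mem_toList.1 (l.getElem_mem _))
  · rw [hlen, Finset.prod_range, ← List.prod_ofFn]
    simp only [Fin.is_lt, List.getD_eq_getElem]
    rw [List.ofFn_getElem_eq_map l fun z => X - C z, ← Multiset.prod_coe, ← Multiset.map_coe, hl,
      Multiset.coe_toList, ← hsplits.eq_prod_roots_of_monic hp]

theorem exists_map_eq_prod_X_sub_C_of_pos_roots {p : ℤ[X]} (hp : p.Monic)
    (hroots : ∀ z : ℂ, aeval z p = 0 → z.im = 0 ∧ 0 < z.re) :
    ∃ a : ℕ → ℝ, (∀ i < p.natDegree, 0 < a i) ∧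
      p.map (Int.castRingHom ℝ) = ∏ i ∈ Finset.range p.natDegree, (X - C (a i)) := by
  set q := p.map (Int.castRingHom ℝ) with hq
  have hroot {z : ℂ} (hz : (q.map Complex.ofRealHom).IsRoot z) : z.im = 0 ∧ 0 < z.re := by
    refine hroots z ?_
    rwa [hq, Polynomial.map_map, RingHom.ext_int (Complex.ofRealHom.comp _) (algebraMap ℤ ℂ),
      IsRoot.def, eval_map_algebraMap] at hz
  have hsplits : q.Splits :=
    Splits.of_splits_map Complex.ofRealHom (IsAlgClosed.splits _) fun z hz =>
      ⟨z.re, Complex.ext rfl (hroot (isRoot_of_mem_roots hz)).1.symm⟩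
  obtain ⟨a, ha, hprod⟩ := exists_eq_prod_range_X_sub_C (hp.map _) hsplits
  rw [hp.natDegree_map] at ha hprod
  exact ⟨a, fun i hi => (hroot ((ha i hi).map (f := Complex.ofRealHom))).2, hprod⟩

variable {R ι : Type*} [CommRing R] [Nontrivial R] [Fintype ι] {m : ι → R} {δ : ι → ℕ} {i₀ : ι}

theorem monic_sum_C_mul_X_pow (hm : m i₀ = 1) (hlt : ∀ i ≠ i₀, δ i < δ i₀) :
    (∑ i, C (m i) * X ^ δ i).Monic ∧ (∑ i, C (m i) * X ^ δ i).natDegree = δ i₀ := by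
  have hdeg : (∑ i, C (m i) * X ^ δ i).natDegree ≤ δ i₀ :=
    natDegree_sum_le_of_forall_le _ _ fun i _ => (natDegree_C_mul_X_pow_le _ _).trans <| by
      rcases eq_or_ne i i₀ with rfl | hi
      exacts [le_rfl, (hlt i hi).le]
  have hcoeff : (∑ i, C (m i) * X ^ δ i).coeff (δ i₀) = 1 := by
    rw [finsetSum_coeff, Finset.sum_eq_single i₀]
    · simp [hm]
    · intro i _ hi
      rw [coeff_C_mul_X_pow, if_neg (hlt i hi).ne']
    · simp
  exact ⟨monic_of_natDegree_le_of_coeff_eq_one _ hdeg hcoeff,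
    natDegree_eq_of_le_of_coeff_ne_zero hdeg (by simp [hcoeff])⟩

end Roots

section GroupRelations

theorem exists_forall_prod_eq_one_iff {n : ℕ} {m : Fin n → ℤ} {δ : Fin n → ℕ} {i₀ : Fin n}
    (hm : m i₀ = 1) (hlt : ∀ i ≠ i₀, δ i < δ i₀) :
    ∃ r : FreeGroup (Fin (δ i₀)), ∀ {G : Type*} [Group G] (y : ℕ → G),
      ((List.finRange n).map fun i => y (δ i) ^ m i).prod = 1 ↔
        y (δ i₀) = FreeGroup.lift (fun j : Fin (δ i₀) => y j) r := by
  obtain ⟨l₁, l₂, hl⟩ := List.append_of_mem (List.mem_finRange i₀)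
  have hnodup := List.nodup_finRange n
  rw [hl, List.nodup_middle, List.nodup_cons, List.mem_append, not_or] at hnodup
  let s (i : Fin n) := if h : δ i < δ i₀ then FreeGroup.of (⟨δ i, h⟩ : Fin (δ i₀)) ^ m i else 1
  refine ⟨(l₁.map s).prod⁻¹ * (l₂.map s).prod⁻¹, fun {G} _ y => ?_⟩
  have hlift (l : List (Fin n)) (hl : i₀ ∉ l) :
      FreeGroup.lift (fun j : Fin (δ i₀) => y j) (l.map s).prod =
        (l.map fun i => y (δ i) ^ m i).prod := by
    rw [map_list_prod, List.map_map]
    refine congrArg List.prod (List.map_congr_left fun i hi => ?_)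
    simp [s, hlt i (ne_of_mem_of_not_mem hi hl)]
  rw [hl, List.map_append, List.prod_append, List.map_cons, List.prod_cons, hm, zpow_one, map_mul,
    map_inv, map_inv, hlift _ hnodup.1.1, hlift _ hnodup.1.2, eq_inv_mul_iff_mul_eq,
    ← mul_eq_one_iff_eq_inv, mul_assoc]

theorem map_prod_conj_zpow {G : Type*} [Group G] (φ : FreeGroup Bool →* G) {n : ℕ}
    (m d : Fin n → ℤ) :
    φ ((List.finRange n).map fun i =>
      FreeGroup.of false ^ (-d i) * FreeGroup.of true ^ m i * FreeGroup.of false ^ d i).prod =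
    ((List.finRange n).map fun i =>
      conjSeq (φ (FreeGroup.of true)) (φ (FreeGroup.of false)) (d i) ^ m i).prod := by
  have hconj (x t : G) (z j : ℤ) : t ^ (-z) * x ^ j * t ^ z = conjSeq x t z ^ j := by
    simpa [conjSeq] using (conj_zpow (i := j) (a := t ^ (-z)) (b := x)).symm
  simp only [map_list_prod, List.map_map, Function.comp_def, map_mul, map_zpow, hconj]

variable {G : Type*} [Group G] {x t : G}

theorem closure_conjSeq_pair_eq_top (hgen : Subgroup.closure {x, t} = ⊤) (z : ℤ) :
    Subgroup.closure {conjSeq x t z, t} = ⊤ := by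
  rw [eq_top_iff, ← hgen, Subgroup.closure_le]
  have hx' : conjSeq x t z ∈ Subgroup.closure {conjSeq x t z, t} :=
    Subgroup.subset_closure (.inl rfl)
  have ht : t ∈ Subgroup.closure {conjSeq x t z, t} := Subgroup.subset_closure (.inr rfl)
  rintro g (rfl | rfl)
  · have hmem : conjSeq (conjSeq g t z) t (-z) ∈ Subgroup.closure {conjSeq g t z, t} :=
      mul_mem (mul_mem (zpow_mem ht (- -z)) hx') (zpow_mem ht (-z))
    rwa [conjSeq_conjSeq, add_neg_cancel, conjSeq_zero] at hmem
  · exact ht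

theorem inv_pow_mul_mul_pow_mem {H : Subgroup G} (ht : ∀ h ∈ H, t⁻¹ * h * t ∈ H) (n : ℕ) :
    ∀ h ∈ H, (t ^ n)⁻¹ * h * t ^ n ∈ H := by
  induction n with
  | zero => simp
  | succ n ih =>
    intro h hh
    convert ht _ (ih h hh) using 1
    group

theorem exists_eq_pow_mul_mul_inv_pow (hgen : Subgroup.closure {x, t} = ⊤) {H : Subgroup G}
    (hx : x ∈ H) (ht : ∀ h ∈ H, t⁻¹ * h * t ∈ H) (g : G) :
    ∃ a b : ℕ, ∃ h ∈ H, g = t ^ a * h * (t ^ b)⁻¹ := by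
  have hg : g ∈ Subgroup.closure {x, t} := hgen ▸ Subgroup.mem_top g
  induction hg using Subgroup.closure_induction with
  | mem g hg =>
    rcases hg with rfl | rfl
    · exact ⟨0, 0, g, hx, by simp⟩
    · exact ⟨1, 0, 1, one_mem _, by simp⟩
  | one => exact ⟨0, 0, 1, one_mem _, by simp⟩
  | mul _ _ _ _ hg hg' =>
    obtain ⟨a, b, h, hh, rfl⟩ := hg
    obtain ⟨a', b', h', hh', rfl⟩ := hg'
    refine ⟨a + a', b + b', _, mul_mem (inv_pow_mul_mul_pow_mem ht a' h hh)
      (inv_pow_mul_mul_pow_mem ht b h' hh'), ?_⟩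
    group
  | inv _ _ hg =>
    obtain ⟨a, b, h, hh, rfl⟩ := hg
    exact ⟨b, a, h⁻¹, inv_mem hh, by group⟩

variable {k : ℕ}

theorem conjSeq_mem_range_lift
    (hk : conjSeq x t k ∈ (FreeGroup.lift fun j : Fin k => conjSeq x t j).range) {j : ℕ}
    (hj : j ≤ k) : conjSeq x t j ∈ (FreeGroup.lift fun j : Fin k => conjSeq x t j).range := by
  rcases hj.lt_or_eq with hlt | rfl
  · exact ⟨FreeGroup.of ⟨j, hlt⟩, FreeGroup.lift_apply_of⟩
  · exact hk

theorem inv_mul_mul_mem_range_lift_conjSeq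
    (hk : conjSeq x t k ∈ (FreeGroup.lift fun j : Fin k => conjSeq x t j).range) :
    ∀ h ∈ (FreeGroup.lift fun j : Fin k => conjSeq x t j).range,
      t⁻¹ * h * t ∈ (FreeGroup.lift fun j : Fin k => conjSeq x t j).range := by
  suffices (FreeGroup.lift fun j : Fin k => conjSeq x t j).range ≤
      (FreeGroup.lift fun j : Fin k => conjSeq x t j).range.comap (MulAut.conj t⁻¹).toMonoidHom from
    fun h hh => by simpa using this hh
  refine FreeGroup.range_lift_le (Set.range_subset_iff.2 fun j => ?_)
  simpa [conjSeq_add_one] using conjSeq_mem_range_lift hk j.isLt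

variable {Γ K V : Type*} [Group Γ] [Monoid K] [MulAction Γ V] [MulAction K V] [SMulCommClass Γ K V]
  {c : K} {v : V}

theorem pow_smul_eq_of_smul_eq {T : Γ} (hT : T • v = c • v) (j : ℕ) : T ^ j • v = c ^ j • v := by
  induction j with
  | zero => simp
  | succ j ih => rw [pow_succ', mul_smul, ih, smul_comm, hT, smul_smul, pow_succ]

theorem conjSeq_smul_eq {X T : Γ} (hX : X • v = v) (hT : T • v = c • v) (j : ℕ) :
    conjSeq X T j • v = v := by
  have hTj := pow_smul_eq_of_smul_eq hT j
  rw [conjSeq, zpow_neg, zpow_natCast, mul_smul, mul_smul, hTj, smul_comm X, hX, ← hTj,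
    inv_smul_smul]

theorem injective_of_injective_lift_conjSeq (hgen : Subgroup.closure {x, t} = ⊤)
    (hk : conjSeq x t k ∈ (FreeGroup.lift fun j : Fin k => conjSeq x t j).range)
    {ρ : G →* Γ} (hx : ρ x • v = v) (ht : ρ t • v = c • v)
    (hc : Function.Injective fun j : ℕ => c ^ j • v)
    (hρ : Function.Injective (FreeGroup.lift fun j : Fin k => conjSeq (ρ x) (ρ t) j)) :
    Function.Injective ρ := by
  have hlift (f : FreeGroup (Fin k)) : ρ (FreeGroup.lift (fun j : Fin k => conjSeq x t j) f) =
      FreeGroup.lift (fun j : Fin k => conjSeq (ρ x) (ρ t) j) f :=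
    DFunLike.congr_fun (FreeGroup.ext_hom (ρ.comp (FreeGroup.lift _)) (FreeGroup.lift _)
      (by simp [map_conjSeq])) f
  have hfix (f : FreeGroup (Fin k)) :
      FreeGroup.lift (fun j : Fin k => conjSeq (ρ x) (ρ t) j) f • v = v :=
    FreeGroup.range_lift_le (s := MulAction.stabilizer _ v)
      (Set.range_subset_iff.2 fun j : Fin k => conjSeq_smul_eq hx ht j) ⟨f, rfl⟩
  rw [injective_iff_map_eq_one]
  intro g hg
  have hx_mem : x ∈ (FreeGroup.lift fun j : Fin k => conjSeq x t j).range := by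
    simpa [conjSeq_zero] using conjSeq_mem_range_lift hk k.zero_le
  obtain ⟨a, b, _, ⟨f, rfl⟩, rfl⟩ := exists_eq_pow_mul_mul_inv_pow hgen hx_mem
    (inv_mul_mul_mem_range_lift_conjSeq hk) g
  rw [map_mul, map_inv, mul_inv_eq_one, map_mul, map_pow, map_pow, hlift] at hg
  have hab : c ^ a • v = c ^ b • v := by
    rw [← pow_smul_eq_of_smul_eq ht, ← pow_smul_eq_of_smul_eq ht, ← hg, mul_smul, hfix]
  obtain rfl : a = b := hc hab
  rw [mul_eq_left, map_eq_one_iff _ hρ] at hg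
  simp [hg]

end GroupRelations

section Presentation

open Polynomial

theorem isBiOrderable_of_conjSeq_mem_range_lift {G : Type*} [Group G] {x t : G}
    (hgen : Subgroup.closure {x, t} = ⊤) {k : ℕ}
    (hk : conjSeq x t k ∈ (FreeGroup.lift fun j : Fin k => conjSeq x t j).range)
    {K : Type*} [Field K] [LinearOrder K] [IsStrictOrderedRing K]
    {ρ : G →* (Module.End K (List (Fin k) →₀ K))ˣ}
    (hx_mem : ρ x ∈ triangularGroup K (letterWeight k))
    (ht_mem : ρ t ∈ triangularGroup K (letterWeight k))
    (hx : ρ x • (Finsupp.single [] 1 : List (Fin k) →₀ K) = Finsupp.single [] 1)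
    (ht : ρ t • (Finsupp.single [] 1 : List (Fin k) →₀ K) = (2 : K) • Finsupp.single [] 1)
    (hρ : Function.Injective (FreeGroup.lift fun j : Fin k => conjSeq (ρ x) (ρ t) j)) :
    IsBiOrderable G := by
  have hpow : Function.Injective fun j : ℕ =>
      (2 : K) ^ j • (Finsupp.single [] 1 : List (Fin k) →₀ K) :=
    (smul_left_injective K (Finsupp.single_ne_zero.2 one_ne_zero)).comp
      (pow_right_injective₀ two_pos (OfNat.ofNat_ne_one 2))
  refine isBiOrderable_of_injective_triangularGroup (wt := letterWeight k)
    (injective_of_injective_lift_conjSeq hgen hk hx ht hpow hρ) fun g => ?_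
  have hle : ⊤ ≤ (triangularGroup K (letterWeight k)).comap ρ := by
    rw [← hgen, Subgroup.closure_le]
    rintro _ (rfl | rfl)
    exacts [hx_mem, ht_mem]
  exact hle (Subgroup.mem_top g)

variable {n : ℕ} {m : Fin n → ℤ} {δ : Fin n → ℕ} {i₀ : Fin n}
  {K : Type} [Field K] [LinearOrder K] [IsStrictOrderedRing K]

open Matrix in
theorem exists_mem_triangularGroup_prod_conjSeq_eq_one (hm : m i₀ = 1)
    (hlt : ∀ i ≠ i₀, δ i < δ i₀) {a : ℕ → K} (ha : ∀ i < δ i₀, 0 < a i)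
    (hp : (∑ i, C (m i) * X ^ δ i).map (Int.castRingHom K) =
      ∏ i ∈ Finset.range (δ i₀), (X - C (a i))) :
    ∃ U ∈ triangularGroup K (letterWeight (δ i₀)), ∃ T ∈ triangularGroup K (letterWeight (δ i₀)),
      U • (Finsupp.single [] 1 : List (Fin (δ i₀)) →₀ K) = Finsupp.single [] 1 ∧
      T • (Finsupp.single [] 1 : List (Fin (δ i₀)) →₀ K) = (2 : K) • Finsupp.single [] 1 ∧
      Function.Injective (FreeGroup.lift fun j : Fin (δ i₀) => conjSeq U T j) ∧
      ((List.finRange n).map fun i => conjSeq U T (δ i) ^ m i).prod = 1 := by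
  set k := δ i₀
  set M := lowerBidiagonal k a
  have hsum : ∑ i, m i • ((M ^ δ i) *ᵥ coordVec K k 0) = 0 := by
    rw [← coordVec_self, ← aeval_prod_lowerBidiagonal_mulVec a k, ← hp]
    simp [Polynomial.map_sum, sum_mulVec, ← zsmul_eq_mul, smul_mulVec, M, Int.cast_smul_eq_zsmul]
  obtain ⟨r, hr⟩ := exists_forall_prod_eq_one_iff hm hlt
  have hr_add := (hr fun j => Multiplicative.ofAdd ((M ^ j) *ᵥ coordVec K k 0)).1 <| by
    rw [← Fin.prod_univ_def]
    simpa only [← ofAdd_zsmul, ← ofAdd_sum, ofAdd_eq_one] using hsum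
  obtain ⟨U, hU, T, hT, hUnil, hTnil, hinj, hUr⟩ := exists_mem_triangularGroup_conjSeq (M := M)
    (fun _ _ => lowerBidiagonal_apply_of_lt a)
    (fun i => (ha i i.isLt).trans_eq (lowerBidiagonal_apply_self a i).symm)
    (linearIndependent_lowerBidiagonal_pow_mulVec a) hr_add.symm
  exact ⟨U, hU, T, hT, hUnil, hTnil, hinj, (hr fun j => conjSeq U T j).2 hUr⟩

theorem closure_of_pair_eq_top (rels : Set (FreeGroup Bool)) :
    Subgroup.closure {(PresentedGroup.of true : PresentedGroup rels), PresentedGroup.of false} =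
      ⊤ := by
  rw [← PresentedGroup.closure_range_of rels, Bool.range_eq, Set.pair_comm]

theorem isBiOrderable_presentedGroup {d : Fin n → ℤ} {e : ℤ} (hd : ∀ i, d i = e + δ i)
    (hm : m i₀ = 1) (hlt : ∀ i ≠ i₀, δ i < δ i₀) {a : ℕ → K} (ha : ∀ i < δ i₀, 0 < a i)
    (hp : (∑ i, C (m i) * X ^ δ i).map (Int.castRingHom K) =
      ∏ i ∈ Finset.range (δ i₀), (X - C (a i))) :
    IsBiOrderable (PresentedGroup
      ({((List.finRange n).map fun i =>
          (FreeGroup.of false) ^ (-(d i)) * (FreeGroup.of true) ^ (m i) *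
            (FreeGroup.of false) ^ (d i)).prod} : Set (FreeGroup Bool))) := by
  obtain ⟨U, hU, T, hT, hUnil, hTnil, hinj, hprod⟩ :=
    exists_mem_triangularGroup_prod_conjSeq_eq_one hm hlt ha hp
  obtain ⟨r, hr⟩ := exists_forall_prod_eq_one_iff hm hlt
  set w := ((List.finRange n).map fun i =>
    FreeGroup.of false ^ (-d i) * FreeGroup.of true ^ m i * FreeGroup.of false ^ d i).prod with hw
  let gens (b : Bool) := if b then conjSeq U T (-e) else T
  have hgens : ∀ g ∈ ({w} : Set (FreeGroup Bool)), FreeGroup.lift gens g = 1 := by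
    rintro _ rfl
    rw [hw, map_prod_conj_zpow]
    simp [gens, conjSeq_conjSeq, hd, hprod]
  let x : PresentedGroup {w} := PresentedGroup.of true
  let t : PresentedGroup {w} := PresentedGroup.of false
  have hrel : ((List.finRange n).map fun i => conjSeq (conjSeq x t e) t (δ i) ^ m i).prod = 1 := by
    simp only [conjSeq_conjSeq, ← hd]
    exact (map_prod_conj_zpow (PresentedGroup.mk {w}) m d).symm.trans
      (PresentedGroup.one_of_mem rfl)
  have hρx : PresentedGroup.toGroup hgens (conjSeq x t e) = U := by
    simp [map_conjSeq, x, t, gens, conjSeq_conjSeq, conjSeq_zero]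
  have hρt : PresentedGroup.toGroup hgens t = T := by simp [t, gens]
  exact isBiOrderable_of_conjSeq_mem_range_lift (ρ := PresentedGroup.toGroup hgens)
    (closure_conjSeq_pair_eq_top (closure_of_pair_eq_top _) e)
    ⟨r, ((hr fun j => conjSeq (conjSeq x t e) t j).1 hrel).symm⟩
    (by rwa [hρx]) (by rwa [hρt]) (by rwa [hρx]) (by rwa [hρt]) (by rwa [hρx, hρt])

end Presentation

/-- **Theorem C.** Let `G = ⟨x, t ∣ w⟩` where `w = ∏ i, t^(-d i) x^(m i) t^(d i)` is a
monic word (tidy, with a unique index attaining the maximal `t`-exponent `D`, at which the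
`x`-exponent is `1`).  If every complex root of `A(X) = ∑ i, m i * X^(d i - e)` is a
positive real number, then `G` is bi-orderable.  Here `x, t` are the two generators of the
free group on `Bool` (`x = of true`, `t = of false`). -/
theorem biorderable_of_monic_positive_real_roots
    (n : ℕ) (hn : 1 ≤ n) (m d : Fin n → ℤ)
    (e D : ℤ)
    (he : IsLeast (Set.range d) e) (hD : IsGreatest (Set.range d) D)
    (htidyE : (∑ i ∈ Finset.univ.filter fun i => d i = e, m i) ≠ 0)
    (htidyD : (∑ i ∈ Finset.univ.filter fun i => d i = D, m i) ≠ 0)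
    (hprincipal : ∃! i : Fin n, d i = D)
    (hmonic : ∀ i : Fin n, d i = D → m i = 1)
    (hroots : ∀ z : ℂ,
      Polynomial.aeval z
        (∑ i : Fin n, Polynomial.C (m i) * Polynomial.X ^ (d i - e).toNat) = 0 →
      z.im = 0 ∧ 0 < z.re) :
    IsBiOrderable (PresentedGroup
      ({((List.finRange n).map fun i =>
          (FreeGroup.of false) ^ (-(d i)) * (FreeGroup.of true) ^ (m i) *
            (FreeGroup.of false) ^ (d i)).prod} : Set (FreeGroup Bool))) := by
  obtain ⟨i₀, hi₀, huniq⟩ := hprincipal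
  have hdegree (i : Fin n) : d i = e + (d i - e).toNat := by
    have := he.2 ⟨i, rfl⟩
    lia
  have hlt (i : Fin n) (hi : i ≠ i₀) : (d i - e).toNat < (d i₀ - e).toNat := by
    have hle := hD.2 ⟨i, rfl⟩
    have hne : d i ≠ D := fun h => hi (huniq i h)
    have := hdegree i
    lia
  obtain ⟨hmon, hnatDegree⟩ := monic_sum_C_mul_X_pow (hmonic i₀ hi₀) hlt
  obtain ⟨a, ha, hprod⟩ := exists_map_eq_prod_X_sub_C_of_pos_roots hmon hroots
  rw [hnatDegree] at ha hprod
  exact isBiOrderable_presentedGroup hdegree (hmonic i₀ hi₀) hlt ha hprod
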